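/- For every solution of the backward Ricci flow system of class U3I0 (case (i)), the quantity AD(B−C) is conserved: A(t)D(t)(B(t)−C(t)) = λ₁λ₄(λ₂−λ₃) for all t ∈ [0,T). -/

import Mathlib

/-!
Put `κ = (A D - (B + C)²) / (A B C)`. The equations for `A` and `D` combine to `(A D)' = κ A D`.
The difference of the equations for `B` and `C` is divisible by `B - C`, because
`B³ - C³ = (B - C) (B² + B C + C²)`, and the quotient is `-κ`: `(B - C)' = -κ (B - C)`.
Opposite logarithmic derivatives cancel in the product `A D (B - C)`.
-/

open Real Set ENNReal

/-- The time domain `[0, T)` where `T ∈ (0, ∞]` is an extended nonnegative real. -/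
def flowDomain (T : ℝ≥0∞) : Set ℝ := {t : ℝ | 0 ≤ t ∧ ENNReal.ofReal t < T}

theorem convex_flowDomain (T : ℝ≥0∞) : Convex ℝ (flowDomain T) :=
  (ordConnected_Ici.inter (ordConnected_Iio.preimage_mono ENNReal.ofReal_mono)).convex

theorem zero_mem_flowDomain {T : ℝ≥0∞} (hT : 0 < T) : (0 : ℝ) ∈ flowDomain T :=
  ⟨le_rfl, by rwa [ENNReal.ofReal_zero]⟩

section OppositeRates

variable {𝕜 : Type*} [RCLike 𝕜] {s : Set 𝕜}

theorem eq_of_hasDerivWithinAt_eq_zero {E : Type*} [NormedAddCommGroup E] [NormedSpace 𝕜 E]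
    {f : 𝕜 → E} (hs : Convex ℝ s) (hf : ∀ t ∈ s, HasDerivWithinAt f 0 s t)
    {x y : 𝕜} (hx : x ∈ s) (hy : y ∈ s) : f x = f y := by
  have hnorm : ‖f x - f y‖ ≤ 0 * ‖x - y‖ :=
    hs.norm_image_sub_le_of_norm_hasDerivWithin_le hf (fun _ _ => norm_zero.le) hy hx
  rwa [zero_mul, norm_le_zero_iff, sub_eq_zero] at hnorm

theorem mul_eq_mul_of_hasDerivWithinAt_opposite_rates {R : Type*} [NormedRing R]
    [NormedAlgebra 𝕜 R] {f g κ : 𝕜 → R} (hs : Convex ℝ s)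
    (hf : ∀ t ∈ s, HasDerivWithinAt f (f t * κ t) s t)
    (hg : ∀ t ∈ s, HasDerivWithinAt g (-κ t * g t) s t)
    {x y : 𝕜} (hx : x ∈ s) (hy : y ∈ s) : f x * g x = f y * g y := by
  refine eq_of_hasDerivWithinAt_eq_zero (f := fun t => f t * g t) hs (fun t ht => ?_) hx hy
  refine ((hf t ht).fun_mul (hg t ht)).congr_deriv ?_
  noncomm_ring

end OppositeRates

/-- Solutions on `s` of the backward Ricci flow system of class `U3I0`, case (i), with time in `𝕜`
and values in a normed field `K`. The nonvanishing fields exclude the junk value of division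
by zero. -/
structure IsU3I0FlowOn {𝕜 K : Type*} [NontriviallyNormedField 𝕜] [NormedField K]
    [NormedAlgebra 𝕜 K] (A B C D : 𝕜 → K) (s : Set 𝕜) : Prop where
  A_ne_zero : ∀ t ∈ s, A t ≠ 0
  B_ne_zero : ∀ t ∈ s, B t ≠ 0
  C_ne_zero : ∀ t ∈ s, C t ≠ 0
  hasDerivWithinAt_A : ∀ t ∈ s, HasDerivWithinAt A (-(B t / C t) - C t / B t - 2) s t
  hasDerivWithinAt_B : ∀ t ∈ s,
    HasDerivWithinAt B (-(C t / A t) - D t / C t + B t ^ 2 / (A t * C t)) s t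
  hasDerivWithinAt_C : ∀ t ∈ s,
    HasDerivWithinAt C (-(B t / A t) - D t / B t + C t ^ 2 / (A t * B t)) s t
  hasDerivWithinAt_D : ∀ t ∈ s, HasDerivWithinAt D (D t ^ 2 / (B t * C t)) s t

namespace IsU3I0FlowOn

/-- The common rate `κ` for which `(A D)' = A D κ` and `(B - C)' = -κ (B - C)` along the flow. -/
def rate {𝕜 K : Type*} [Field K] (A B C D : 𝕜 → K) (t : 𝕜) : K :=
  (A t * D t - (B t + C t) ^ 2) / (A t * B t * C t)

variable {𝕜 K : Type*} [NontriviallyNormedField 𝕜] [NormedField K] [NormedAlgebra 𝕜 K]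
  {A B C D : 𝕜 → K} {s : Set 𝕜} {t : 𝕜}

theorem hasDerivWithinAt_A_mul_D (h : IsU3I0FlowOn A B C D s) (ht : t ∈ s) :
    HasDerivWithinAt (fun t => A t * D t) (A t * D t * rate A B C D t) s t := by
  have hA := h.A_ne_zero t ht
  have hB := h.B_ne_zero t ht
  have hC := h.C_ne_zero t ht
  refine ((h.hasDerivWithinAt_A t ht).fun_mul (h.hasDerivWithinAt_D t ht)).congr_deriv ?_
  rw [rate]
  field_simp
  ring

theorem hasDerivWithinAt_B_sub_C (h : IsU3I0FlowOn A B C D s) (ht : t ∈ s) :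
    HasDerivWithinAt (fun t => B t - C t) (-rate A B C D t * (B t - C t)) s t := by
  have hA := h.A_ne_zero t ht
  have hB := h.B_ne_zero t ht
  have hC := h.C_ne_zero t ht
  refine ((h.hasDerivWithinAt_B t ht).fun_sub (h.hasDerivWithinAt_C t ht)).congr_deriv ?_
  rw [rate]
  field_simp
  ring

end IsU3I0FlowOn

theorem stmt8_general {𝕜 K : Type*} [RCLike 𝕜] [NormedField K] [NormedAlgebra 𝕜 K]
    {A B C D : 𝕜 → K} {s : Set 𝕜} (hs : Convex ℝ s) (h : IsU3I0FlowOn A B C D s)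
    {t₀ t : 𝕜} (ht₀ : t₀ ∈ s) (ht : t ∈ s) :
    A t * D t * (B t - C t) = A t₀ * D t₀ * (B t₀ - C t₀) :=
  mul_eq_mul_of_hasDerivWithinAt_opposite_rates hs (fun _ => h.hasDerivWithinAt_A_mul_D)
    (fun _ => h.hasDerivWithinAt_B_sub_C) ht ht₀

/-- For every solution of the backward Ricci flow system of class `U3I0`, case (i),
the quantity `AD(B−C)` is conserved: `A(t)D(t)(B(t)−C(t)) = λ₁λ₄(λ₂−λ₃)` for all `t ∈ [0,T)`. -/
theorem stmt8 (T : ℝ≥0∞) (hT : 0 < T)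
    (lam1 lam2 lam3 lam4 : ℝ)
    (hlam1 : 0 < lam1) (hlam2 : 0 < lam2) (hlam3 : 0 < lam3) (hlam4 : 0 < lam4)
    (A B C D : ℝ → ℝ)
    (hpos : ∀ t ∈ flowDomain T, 0 < A t ∧ 0 < B t ∧ 0 < C t ∧ 0 < D t)
    (hA : ∀ t ∈ flowDomain T,
      HasDerivWithinAt A (-(B t / C t) - C t / B t - 2) (flowDomain T) t)
    (hB : ∀ t ∈ flowDomain T,
      HasDerivWithinAt B (-(C t / A t) - D t / C t + B t ^ 2 / (A t * C t)) (flowDomain T) t)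
    (hC : ∀ t ∈ flowDomain T,
      HasDerivWithinAt C (-(B t / A t) - D t / B t + C t ^ 2 / (A t * B t)) (flowDomain T) t)
    (hD : ∀ t ∈ flowDomain T,
      HasDerivWithinAt D (D t ^ 2 / (B t * C t)) (flowDomain T) t)
    (hA0 : A 0 = lam1) (hB0 : B 0 = lam2) (hC0 : C 0 = lam3) (hD0 : D 0 = lam4) :
    ∀ t ∈ flowDomain T,
      A t * D t * (B t - C t) = lam1 * lam4 * (lam2 - lam3) := by
  have hflow : IsU3I0FlowOn A B C D (flowDomain T) :=
    ⟨fun t ht => (hpos t ht).1.ne', fun t ht => (hpos t ht).2.1.ne',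
      fun t ht => (hpos t ht).2.2.1.ne', hA, hB, hC, hD⟩
  intro t ht
  simpa only [hA0, hB0, hC0, hD0] using
    stmt8_general (convex_flowDomain T) hflow (zero_mem_flowDomain hT) ht
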